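/- Let θ > 0, t > 0 and f ∈ 𝒮. Then the function (P_t f)'·1_{(0,∞)} belongs to 𝒮; that is: (P_t f)' is C² on (0,∞), the one-sided limits at 0⁺ of (P_t f)', (P_t f)'' and (P_t f)''' exist and are finite, and lim_{x→∞} (P_t f)'(x) = 0. -/

import Mathlib

open MeasureTheory Real Filter Set

/-- Complementary error function `erfc(x) = (2/√π)·∫_x^∞ e^{−y²} dy`. -/
noncomputable def erfc (x : ℝ) : ℝ :=
  (2 / Real.sqrt Real.pi) * ∫ y in Set.Ioi x, Real.exp (-y ^ 2)

/-- `g_t(x) = θ·exp(2θx + 2θ²t)·erfc(x/√(2t) + θ·√(2t))`. -/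
noncomputable def gfun (θ t x : ℝ) : ℝ :=
  θ * Real.exp (2 * θ * x + 2 * θ ^ 2 * t) *
    erfc (x / Real.sqrt (2 * t) + θ * Real.sqrt (2 * t))

/-- The Gaussian kernel `p_t(x,y) = (2πt)^{−1/2}·exp(−(y−x)²/(2t))`. -/
noncomputable def pker (t x y : ℝ) : ℝ :=
  (Real.sqrt (2 * Real.pi * t))⁻¹ * Real.exp (-(y - x) ^ 2 / (2 * t))

/-- The sticky Brownian motion semigroup:
`P_t f(x) = ∫_0^∞ (p_t(x,y) − p_t(x,−y) + 2 g_t(x+y)) f(y) dy + (1/θ) g_t(x) f(0)`. -/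
noncomputable def Pt (θ t : ℝ) (f : ℝ → ℝ) (x : ℝ) : ℝ :=
  (∫ y in Set.Ioi (0:ℝ), (pker t x y - pker t x (-y) + 2 * gfun θ t (x + y)) * f y)
    + (1 / θ) * gfun θ t x * f 0

/-- `f ∈ 𝒮`: `f` is C² on `(0,∞)`, the one-sided limits `f(0⁺)`, `f'(0⁺)`, `f''(0⁺)` exist
and are finite, and `lim_{x→∞} f(x) = 0`. -/
def memS (f : ℝ → ℝ) : Prop :=
  ContDiffOn ℝ 2 f (Set.Ioi 0) ∧
  (∃ a : ℝ, Filter.Tendsto f (nhdsWithin 0 (Set.Ioi 0)) (nhds a)) ∧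
  (∃ b : ℝ, Filter.Tendsto (deriv f) (nhdsWithin 0 (Set.Ioi 0)) (nhds b)) ∧
  (∃ c : ℝ, Filter.Tendsto (deriv (deriv f)) (nhdsWithin 0 (Set.Ioi 0)) (nhds c)) ∧
  Filter.Tendsto f Filter.atTop (nhds 0)

open Asymptotics Polynomial
open scoped ContDiff Topology

/-!
Split `P_t f` into Laplace-type transforms `x ↦ ∫_{y > 0} K(x + y) f(y) dy` of `f` with kernels
`p_t(0, ·)` and `g_t`, the term with kernel `p_t(x, y) = p_t(0, -x + y)` being such a transform
reflected in `x`. Since `g_t' = 2θ (g_t - p_t(0, ·))`, all derivatives of both kernels are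
combinations of `g_t` and of polynomials times a Gaussian, hence decay exponentially at `+∞`. One
may therefore differentiate under the integral infinitely often, on the whole line, so that all
derivatives of `P_t f` have limits at `0⁺`. At infinity the unreflected terms inherit the decay of
their kernels, while every derivative of the reflected one is an integral of translates of `f`
against an integrable kernel, so it vanishes with `f` by dominated convergence.
-/

theorem isBigO_principal_Ici_of_isBigO_atTop {f g : ℝ → ℝ} {a : ℝ} (hf : ContinuousOn f (Ici a))
    (hg : ContinuousOn g (Ici a)) (hg0 : ∀ x ∈ Ici a, g x ≠ 0) (h : f =O[atTop] g) :
    f =O[𝓟 (Ici a)] g := by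
  obtain ⟨c, hc⟩ := h.bound
  obtain ⟨b, hb⟩ := eventually_atTop.1 hc
  have near : f =O[𝓟 (Icc a b)] g := by
    have hquot : (fun x => f x / g x) =O[𝓟 (Icc a b)] fun _ => (1 : ℝ) :=
      ((hf.div hg hg0).mono Icc_subset_Ici_self).isBigO_principal isCompact_Icc (by simp)
    refine (hquot.mul (isBigO_refl g _)).congr' ?_ (by simp)
    filter_upwards [mem_principal_self _] with x hx
    exact div_mul_cancel₀ _ (hg0 x hx.1)
  have far : f =O[𝓟 (Ici b)] g := isBigO_principal.2 ⟨c, hb⟩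
  refine (near.sup far).mono ?_
  rw [sup_principal, principal_mono]
  exact fun x hx => (le_total x b).imp (fun hxb => ⟨hx, hxb⟩) id

theorem isBigO_one_principal_Ioi_of_tendsto {f : ℝ → ℝ} {a l m : ℝ} (hf : ContinuousOn f (Ioi a))
    (hleft : Tendsto f (𝓝[>] a) (𝓝 l)) (htop : Tendsto f atTop (𝓝 m)) :
    f =O[𝓟 (Ioi a)] fun _ => (1 : ℝ) := by
  obtain ⟨c, hc⟩ := (hleft.isBigO_one ℝ).bound
  obtain ⟨b, hab, hb⟩ := mem_nhdsGT_iff_exists_Ioo_subset.1 hc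
  have near : f =O[𝓟 (Ioo a b)] fun _ => (1 : ℝ) := isBigO_principal.2 ⟨c, hb⟩
  have far : f =O[𝓟 (Ici b)] fun _ => (1 : ℝ) :=
    isBigO_principal_Ici_of_isBigO_atTop (hf.mono (Ici_subset_Ioi.2 hab)) continuousOn_const
      (by simp) (htop.isBigO_one ℝ)
  refine (near.sup far).mono ?_
  rw [sup_principal, Ioo_union_Ici_eq_Ioi hab]

/-- The real functions that are smooth on the whole line and whose derivatives of every order,
including the function itself, tend to `0` at `+∞`. -/
def smoothVanishing : Submodule ℝ (ℝ → ℝ) where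
  carrier := {F | ContDiff ℝ ∞ F ∧ ∀ n, Tendsto (iteratedDeriv n F) atTop (𝓝 0)}
  zero_mem' := ⟨contDiff_const, fun _ =>
    tendsto_const_nhds.congr fun _ => iteratedDeriv_const_zero.symm⟩
  add_mem' {F G} hF hG := ⟨hF.1.add hG.1, fun n => by
    have := (hF.2 n).add (hG.2 n)
    rw [add_zero] at this
    refine this.congr fun x => (iteratedDeriv_add ?_ ?_).symm
    · exact (hF.1.of_le (by exact_mod_cast le_top)).contDiffAt
    · exact (hG.1.of_le (by exact_mod_cast le_top)).contDiffAt⟩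
  smul_mem' c F hF := ⟨hF.1.const_smul c, fun n => by
    have := (hF.2 n).const_smul c
    rw [smul_zero] at this
    exact this.congr fun x => (iteratedDeriv_const_smul_field c F).symm⟩

/-- A kernel, smooth on the whole line, all of whose derivatives are `O(e^{-u})` as `u → +∞`;
nothing is required at `-∞`. -/
structure SmoothExpDecay (K : ℝ → ℝ) : Prop where
  contDiff : ContDiff ℝ ∞ K
  isBigO (n : ℕ) : iteratedDeriv n K =O[atTop] fun u => exp (-u)

/-- The one-sided correlation `x ↦ ∫_0^∞ K(x + y) f(y) dy` of `f` with the kernel `K`. -/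
noncomputable def halfLineCorr (K f : ℝ → ℝ) (x : ℝ) : ℝ :=
  ∫ y in Ioi 0, K (x + y) * f y

section HalfLineCorr

variable {K f : ℝ → ℝ}

theorem exists_norm_mul_le_exp_neg (hK : Continuous K) (hdecay : K =O[atTop] fun u => exp (-u))
    (hf : MemLp f ⊤ (volume.restrict (Ioi 0))) (a : ℝ) :
    ∃ C, ∀ᵐ y ∂volume.restrict (Ioi 0), ∀ x ≥ a, ‖K (x + y) * f y‖ ≤ C * exp (-x) * exp (-y) := by
  obtain ⟨C, hC⟩ := isBigO_principal.1 <|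
    isBigO_principal_Ici_of_isBigO_atTop (a := a) hK.continuousOn (by fun_prop)
      (fun _ _ => (exp_pos _).ne') hdecay
  refine ⟨C * lpNorm f ⊤ (volume.restrict (Ioi 0)), ?_⟩
  filter_upwards [ae_le_lpNorm_exponent_top hf, ae_restrict_mem measurableSet_Ioi]
    with y hfy (hy : 0 < y) x hx
  have hKxy := hC (x + y) (by simp only [mem_Ici]; linarith)
  rw [Real.norm_of_nonneg (exp_pos _).le] at hKxy
  calc ‖K (x + y) * f y‖ = ‖K (x + y)‖ * ‖f y‖ := norm_mul _ _
    _ ≤ C * exp (-(x + y)) * lpNorm f ⊤ (volume.restrict (Ioi 0)) := by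
      gcongr
      exact (norm_nonneg _).trans hKxy
    _ = _ := by rw [neg_add, exp_add]; ring

theorem integrable_const_mul_exp_neg_Ioi (c a : ℝ) :
    Integrable (fun y => c * exp (-y)) (volume.restrict (Ioi a)) :=
  (integrableOn_exp_neg_Ioi a).const_mul c

theorem aestronglyMeasurable_comp_const_add_mul (hK : Continuous K)
    (hf : AEStronglyMeasurable f (volume.restrict (Ioi 0))) (x : ℝ) :
    AEStronglyMeasurable (fun y => K (x + y) * f y) (volume.restrict (Ioi 0)) :=
  (hK.comp (continuous_const_add x)).aestronglyMeasurable.mul hf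

theorem integrable_comp_const_add_mul (hK : Continuous K)
    (hdecay : K =O[atTop] fun u => exp (-u)) (hf : MemLp f ⊤ (volume.restrict (Ioi 0))) (x : ℝ) :
    Integrable (fun y => K (x + y) * f y) (volume.restrict (Ioi 0)) := by
  obtain ⟨C, hC⟩ := exists_norm_mul_le_exp_neg hK hdecay hf x
  exact (integrable_const_mul_exp_neg_Ioi (C * exp (-x)) 0).mono'
    (aestronglyMeasurable_comp_const_add_mul hK hf.1 x) (hC.mono fun y hy => hy x le_rfl)

theorem halfLineCorr_isBigO_exp_neg (hK : Continuous K) (hdecay : K =O[atTop] fun u => exp (-u))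
    (hf : MemLp f ⊤ (volume.restrict (Ioi 0))) :
    halfLineCorr K f =O[atTop] fun x => exp (-x) := by
  obtain ⟨C, hC⟩ := exists_norm_mul_le_exp_neg hK hdecay hf 0
  refine IsBigO.of_bound C ?_
  filter_upwards [eventually_ge_atTop 0] with x hx
  calc ‖halfLineCorr K f x‖ ≤ ∫ y in Ioi 0, C * exp (-x) * exp (-y) :=
        norm_integral_le_of_norm_le (integrable_const_mul_exp_neg_Ioi _ 0)
          (hC.mono fun y hy => hy x hx)
    _ = C * ‖exp (-x)‖ := by
      rw [integral_const_mul, integral_exp_neg_Ioi_zero, mul_one,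
        Real.norm_of_nonneg (exp_pos _).le]

theorem tendsto_halfLineCorr_atBot (hK : Integrable K) (hf : MemLp f ⊤ (volume.restrict (Ioi 0)))
    (hftop : Tendsto f atTop (𝓝 0)) :
    Tendsto (halfLineCorr K f) atBot (𝓝 0) := by
  let h := (Ioi (0 : ℝ)).indicator f
  have hh : MemLp h ⊤ := (memLp_indicator_iff_restrict measurableSet_Ioi).2 hf
  have htop : Tendsto h atTop (𝓝 0) := hftop.congr' <| by
    filter_upwards [eventually_gt_atTop 0] with y hy
    exact (indicator_of_mem (mem_Ioi.2 hy) f).symm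
  have translate (x : ℝ) : halfLineCorr K f x = ∫ u, K u * h (u - x) := by
    rw [← integral_add_left_eq_self _ x, halfLineCorr, ← integral_indicator measurableSet_Ioi]
    simp only [indicator_mul_right, add_sub_cancel_left, h]
  have hlim : Tendsto (fun x => ∫ u, K u * h (u - x)) atBot (𝓝 (∫ _ : ℝ, (0 : ℝ))) := by
    refine tendsto_integral_filter_of_dominated_convergence (fun u => ‖K u‖ * lpNorm h ⊤ volume)
      (.of_forall fun x => hK.1.mul (hh.1.comp_measurePreserving (measurePreserving_sub_right _ x)))
      (.of_forall fun x => ?_) (hK.norm.mul_const _) (.of_forall fun u => ?_)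
    · filter_upwards [(measurePreserving_sub_right volume x).quasiMeasurePreserving.ae
        (ae_le_lpNorm_exponent_top hh)] with u hu
      rw [norm_mul]
      gcongr
    · simpa only [mul_zero, sub_eq_add_neg, Function.comp_def] using
        (htop.comp (tendsto_atTop_add_const_left _ u tendsto_neg_atBot_atTop)).const_mul (K u)
  simpa only [integral_zero, ← translate] using hlim

theorem hasDerivAt_halfLineCorr {K' : ℝ → ℝ} (hK : ∀ u, HasDerivAt K (K' u) u) (hK' : Continuous K')
    (hdecay : K =O[atTop] fun u => exp (-u)) (hdecay' : K' =O[atTop] fun u => exp (-u))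
    (hf : MemLp f ⊤ (volume.restrict (Ioi 0))) (x : ℝ) :
    HasDerivAt (halfLineCorr K f) (halfLineCorr K' f x) x := by
  have hKcont : Continuous K := continuous_iff_continuousAt.2 fun u => (hK u).continuousAt
  obtain ⟨C, hC⟩ := exists_norm_mul_le_exp_neg hK' hdecay' hf (x - 1)
  refine (hasDerivAt_integral_of_dominated_loc_of_deriv_le
    (F := fun x y => K (x + y) * f y) (F' := fun x y => K' (x + y) * f y)
    (Ioo_mem_nhds (sub_one_lt x) (lt_add_one x))
    (.of_forall (aestronglyMeasurable_comp_const_add_mul hKcont hf.1))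
    (integrable_comp_const_add_mul hKcont hdecay hf x)
    (aestronglyMeasurable_comp_const_add_mul hK' hf.1 x) ?_
    (integrable_const_mul_exp_neg_Ioi (|C| * exp (-(x - 1))) 0) ?_).2
  · filter_upwards [hC] with y hy z hz
    refine (hy z hz.1.le).trans ?_
    gcongr
    · exact le_abs_self C
    · exact hz.1.le
  · exact .of_forall fun y z _ => ((hK (z + y)).comp_add_const z y).mul_const (f y)

end HalfLineCorr

namespace SmoothExpDecay

variable {K f : ℝ → ℝ}

theorem continuous_iteratedDeriv (hK : SmoothExpDecay K) (n : ℕ) :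
    Continuous (iteratedDeriv n K) :=
  hK.contDiff.continuous_iteratedDeriv n (by exact_mod_cast le_top)

theorem hasDerivAt_iteratedDeriv (hK : SmoothExpDecay K) (n : ℕ) (u : ℝ) :
    HasDerivAt (iteratedDeriv n K) (iteratedDeriv (n + 1) K u) u := by
  rw [iteratedDeriv_succ]
  exact (hK.contDiff.differentiable_iteratedDeriv n
    (by exact_mod_cast ENat.natCast_lt_top n) u).hasDerivAt

theorem mem_smoothVanishing (hK : SmoothExpDecay K) : K ∈ smoothVanishing :=
  ⟨hK.contDiff, fun n => (hK.isBigO n).trans_tendsto tendsto_exp_neg_atTop_nhds_zero⟩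

theorem hasDerivAt_halfLineCorr_iteratedDeriv (hK : SmoothExpDecay K)
    (hf : MemLp f ⊤ (volume.restrict (Ioi 0))) (n : ℕ) (x : ℝ) :
    HasDerivAt (halfLineCorr (iteratedDeriv n K) f)
      (halfLineCorr (iteratedDeriv (n + 1) K) f x) x :=
  hasDerivAt_halfLineCorr (hK.hasDerivAt_iteratedDeriv n) (hK.continuous_iteratedDeriv (n + 1))
    (hK.isBigO n) (hK.isBigO (n + 1)) hf x

theorem iteratedDeriv_halfLineCorr (hK : SmoothExpDecay K)
    (hf : MemLp f ⊤ (volume.restrict (Ioi 0))) (n : ℕ) :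
    iteratedDeriv n (halfLineCorr K f) = halfLineCorr (iteratedDeriv n K) f := by
  induction n with
  | zero => simp only [iteratedDeriv_zero]
  | succ n ih =>
    rw [iteratedDeriv_succ, ih]
    exact funext fun x => (hK.hasDerivAt_halfLineCorr_iteratedDeriv hf n x).deriv

protected theorem halfLineCorr (hK : SmoothExpDecay K)
    (hf : MemLp f ⊤ (volume.restrict (Ioi 0))) : SmoothExpDecay (halfLineCorr K f) where
  contDiff := contDiff_of_differentiable_iteratedDeriv fun n _ x => by
    rw [hK.iteratedDeriv_halfLineCorr hf]
    exact (hK.hasDerivAt_halfLineCorr_iteratedDeriv hf n x).differentiableAt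
  isBigO n := by
    rw [hK.iteratedDeriv_halfLineCorr hf]
    exact halfLineCorr_isBigO_exp_neg (hK.continuous_iteratedDeriv n) (hK.isBigO n) hf

theorem halfLineCorr_comp_neg_mem_smoothVanishing (hK : SmoothExpDecay K)
    (hint : ∀ n, Integrable (iteratedDeriv n K)) (hf : MemLp f ⊤ (volume.restrict (Ioi 0)))
    (hftop : Tendsto f atTop (𝓝 0)) :
    (fun x => halfLineCorr K f (-x)) ∈ smoothVanishing := by
  refine ⟨(hK.halfLineCorr hf).contDiff.comp contDiff_neg, fun n => ?_⟩
  have hlim := ((tendsto_halfLineCorr_atBot (hint n) hf hftop).comp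
    tendsto_neg_atTop_atBot).const_smul ((-1 : ℝ) ^ n)
  rw [smul_zero] at hlim
  refine hlim.congr fun x => ?_
  rw [iteratedDeriv_comp_neg, hK.iteratedDeriv_halfLineCorr hf, Function.comp_apply]

end SmoothExpDecay

/-- The product of the polynomial `P` and the unnormalised centred Gaussian of variance `t`. These
functions form a class closed under differentiation. -/
noncomputable def polyGauss (t : ℝ) (P : ℝ[X]) (u : ℝ) : ℝ :=
  P.eval u * exp (-u ^ 2 / (2 * t))

section PolyGauss

variable {t : ℝ}

theorem hasDerivAt_polyGauss (t : ℝ) (P : ℝ[X]) (u : ℝ) :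
    HasDerivAt (polyGauss t P) (polyGauss t (derivative P - C t⁻¹ * X * P) u) u := by
  have hexp : HasDerivAt (fun u : ℝ => -u ^ 2 / (2 * t)) (-(2 * u) / (2 * t)) u := by
    simpa using (hasDerivAt_pow 2 u).neg.div_const (2 * t)
  refine ((P.hasDerivAt u).mul hexp.exp).congr_deriv ?_
  simp only [polyGauss, eval_sub, eval_mul, eval_C, eval_X]
  ring

theorem exists_iteratedDeriv_polyGauss_eq (t : ℝ) (P : ℝ[X]) (n : ℕ) :
    ∃ Q, iteratedDeriv n (polyGauss t P) = polyGauss t Q := by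
  induction n with
  | zero => exact ⟨P, iteratedDeriv_zero⟩
  | succ n ih =>
    obtain ⟨Q, hQ⟩ := ih
    refine ⟨derivative Q - C t⁻¹ * X * Q, ?_⟩
    rw [iteratedDeriv_succ, hQ]
    exact funext fun u => (hasDerivAt_polyGauss t Q u).deriv

theorem contDiff_polyGauss (t : ℝ) (P : ℝ[X]) : ContDiff ℝ ∞ (polyGauss t P) :=
  (P.contDiff_aeval ∞).mul (by fun_prop)

theorem polyGauss_isBigO_exp_neg (ht : 0 < t) (P : ℝ[X]) :
    polyGauss t P =O[atTop] fun u => exp (-u) := by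
  have hpoly : (fun u => P.eval u) =O[atTop] exp :=
    (isLittleO_of_tendsto (fun u hu => absurd hu (exp_pos u).ne') P.tendsto_div_exp_atTop).isBigO
  have hgauss : (fun u => exp (-u ^ 2 / (2 * t))) =O[atTop] fun u => exp (-(2 * u)) := by
    refine ((exp_neg_mul_sq_isLittleO_exp_neg (b := 1 / (8 * t)) (by positivity)).comp_tendsto
      (tendsto_id.const_mul_atTop two_pos)).isBigO.congr_left fun u => ?_
    simp only [Function.comp_apply, id]
    congr 1
    field_simp
    ring
  refine (hpoly.mul hgauss).congr_right fun u => ?_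
  rw [← exp_add]
  ring_nf

theorem integrable_polyGauss (ht : 0 < t) (P : ℝ[X]) : Integrable (polyGauss t P) := by
  have hmonomial (n : ℕ) : Integrable fun u : ℝ => u ^ n * exp (-(1 / (2 * t)) * u ^ 2) := by
    have hn : (-1 : ℝ) < n := neg_one_lt_zero.trans_le n.cast_nonneg
    simpa only [rpow_natCast] using
      integrable_rpow_mul_exp_neg_mul_sq (b := 1 / (2 * t)) (by positivity) hn
  have hsum : polyGauss t P = fun u => ∑ n ∈ Finset.range (P.natDegree + 1),
      P.coeff n * (u ^ n * exp (-(1 / (2 * t)) * u ^ 2)) := by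
    funext u
    rw [polyGauss, eval_eq_sum_range, Finset.sum_mul]
    refine Finset.sum_congr rfl fun n _ => ?_
    ring_nf
  rw [hsum]
  exact integrable_finsetSum _ fun n _ => (hmonomial n).const_mul _

theorem smoothExpDecay_polyGauss (ht : 0 < t) (P : ℝ[X]) : SmoothExpDecay (polyGauss t P) where
  contDiff := contDiff_polyGauss t P
  isBigO n := by
    obtain ⟨Q, hQ⟩ := exists_iteratedDeriv_polyGauss_eq t P n
    exact hQ ▸ polyGauss_isBigO_exp_neg ht Q

theorem pker_zero_eq_polyGauss (t : ℝ) : pker t 0 = polyGauss t (C (√(2 * π * t))⁻¹) := by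
  funext u
  simp only [pker, polyGauss, sub_zero, eval_C]

theorem smoothExpDecay_pker_zero (ht : 0 < t) : SmoothExpDecay (pker t 0) :=
  pker_zero_eq_polyGauss t ▸ smoothExpDecay_polyGauss ht _

theorem integrable_iteratedDeriv_pker_zero (ht : 0 < t) (n : ℕ) :
    Integrable (iteratedDeriv n (pker t 0)) := by
  rw [pker_zero_eq_polyGauss]
  obtain ⟨Q, hQ⟩ := exists_iteratedDeriv_polyGauss_eq t (C (√(2 * π * t))⁻¹) n
  exact hQ ▸ integrable_polyGauss ht Q

end PolyGauss

theorem integrable_exp_neg_sq : Integrable fun y : ℝ => exp (-y ^ 2) := by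
  simpa only [neg_one_mul] using integrable_exp_neg_mul_sq one_pos

theorem hasDerivAt_erfc (x : ℝ) : HasDerivAt erfc (-(2 / √π) * exp (-x ^ 2)) x := by
  have herfc : erfc = fun x =>
      2 / √π * ((∫ y in Ioi 0, exp (-y ^ 2)) - ∫ y in (0)..x, exp (-y ^ 2)) := by
    funext x
    rw [← intervalIntegral.integral_Ioi_sub_Ioi' integrable_exp_neg_sq.integrableOn
      integrable_exp_neg_sq.integrableOn, sub_sub_cancel, erfc]
  have hcont : Continuous fun y : ℝ => exp (-y ^ 2) := by fun_prop
  rw [herfc, neg_mul_comm]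
  exact ((hcont.integral_hasStrictDerivAt 0 x).hasDerivAt.const_sub _).const_mul _

theorem contDiff_erfc : ContDiff ℝ ∞ erfc := by
  refine contDiff_infty_iff_deriv.2 ⟨fun x => (hasDerivAt_erfc x).differentiableAt, ?_⟩
  rw [funext fun x => (hasDerivAt_erfc x).deriv]
  fun_prop

theorem erfc_nonneg (x : ℝ) : 0 ≤ erfc x := by
  unfold erfc
  positivity

theorem erfc_zero : erfc 0 = 1 := by
  have h := integral_gaussian_Ioi 1
  simp only [neg_one_mul, div_one] at h
  rw [erfc, h]
  field_simp

theorem erfc_le_exp_neg_sq {x : ℝ} (hx : 0 ≤ x) : erfc x ≤ exp (-x ^ 2) := by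
  have htail : ∫ y in Ioi x, exp (-y ^ 2) ≤ exp (-x ^ 2) * ∫ y in Ioi 0, exp (-y ^ 2) := by
    have hshift : ∫ y in Ioi x, exp (-y ^ 2) = ∫ y in Ioi 0, exp (-(y + x) ^ 2) := by
      simpa only [preimage_add_const_Ioi, sub_self] using
        ((measurePreserving_add_right volume x).setIntegral_preimage_emb
          (measurableEmbedding_addRight x) (fun y => exp (-y ^ 2)) (Ioi x)).symm
    rw [hshift, ← integral_const_mul]
    refine setIntegral_mono_on (integrable_exp_neg_sq.comp_add_right x).integrableOn
      (integrable_exp_neg_sq.const_mul _).integrableOn measurableSet_Ioi fun y hy => ?_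
    rw [← exp_add, exp_le_exp]
    nlinarith [mul_nonneg hx (le_of_lt hy)]
  calc erfc x ≤ 2 / √π * (exp (-x ^ 2) * ∫ y in Ioi 0, exp (-y ^ 2)) := by
        unfold erfc
        gcongr
    _ = exp (-x ^ 2) * erfc 0 := by rw [erfc, mul_left_comm]
    _ = exp (-x ^ 2) := by rw [erfc_zero, mul_one]

section Gfun

variable {t : ℝ}

theorem exp_mul_exp_neg_sq_eq (θ : ℝ) (ht : 0 < t) (u : ℝ) :
    exp (2 * θ * u + 2 * θ ^ 2 * t) * exp (-(u / √(2 * t) + θ * √(2 * t)) ^ 2) =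
      exp (-u ^ 2 / (2 * t)) := by
  have hsqrt : √(2 * t) ^ 2 = 2 * t := sq_sqrt (by positivity)
  have hsquare : (u / √(2 * t) + θ * √(2 * t)) ^ 2 =
      u ^ 2 / √(2 * t) ^ 2 + 2 * θ * u + θ ^ 2 * √(2 * t) ^ 2 := by
    field_simp
    ring
  rw [← exp_add, hsquare, hsqrt]
  ring_nf

theorem hasDerivAt_gfun (θ : ℝ) (ht : 0 < t) (u : ℝ) :
    HasDerivAt (gfun θ t) (2 * θ * (gfun θ t u - pker t 0 u)) u := by
  have harg : HasDerivAt (fun u => u / √(2 * t) + θ * √(2 * t)) (1 / √(2 * t)) u :=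
    ((hasDerivAt_id u).div_const _).add_const _
  have hexp : HasDerivAt (fun u => 2 * θ * u + 2 * θ ^ 2 * t) (2 * θ) u := by
    simpa only [id, mul_one] using ((hasDerivAt_id u).const_mul (2 * θ)).add_const (2 * θ ^ 2 * t)
  have hnorm : √(2 * π * t) = √π * √(2 * t) := by
    rw [← sqrt_mul pi_pos.le]
    ring_nf
  refine ((hexp.exp.const_mul θ).mul ((hasDerivAt_erfc _).comp u harg)).congr_deriv ?_
  simp only [pker, sub_zero, gfun, Function.comp_apply]
  rw [← exp_mul_exp_neg_sq_eq θ ht u, hnorm, mul_inv]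
  ring

theorem contDiff_gfun (θ t : ℝ) : ContDiff ℝ ∞ (gfun θ t) := by
  unfold gfun
  exact (by fun_prop : ContDiff ℝ ∞ fun x => θ * exp (2 * θ * x + 2 * θ ^ 2 * t)).mul
    (contDiff_erfc.comp (by fun_prop))

theorem exists_iteratedDeriv_gfun_eq (θ : ℝ) (ht : 0 < t) (n : ℕ) :
    ∃ Q, iteratedDeriv n (gfun θ t) = fun u => (2 * θ) ^ n * gfun θ t u + polyGauss t Q u := by
  induction n with
  | zero => exact ⟨0, by simp [polyGauss]⟩
  | succ n ih =>
    obtain ⟨Q, hQ⟩ := ih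
    refine ⟨derivative Q - C t⁻¹ * X * Q - C ((2 * θ) ^ (n + 1) * (√(2 * π * t))⁻¹), ?_⟩
    rw [iteratedDeriv_succ, hQ]
    funext u
    rw [(((hasDerivAt_gfun θ ht u).const_mul _).fun_add (hasDerivAt_polyGauss t Q u)).deriv]
    simp only [pker_zero_eq_polyGauss, polyGauss, eval_sub, eval_C]
    ring

theorem gfun_isBigO_gaussian (θ : ℝ) (ht : 0 < t) :
    gfun θ t =O[atTop] fun u => exp (-u ^ 2 / (2 * t)) := by
  refine IsBigO.of_bound |θ| ?_
  filter_upwards [eventually_ge_atTop (-(2 * θ * t))] with u hu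
  have harg : 0 ≤ u / √(2 * t) + θ * √(2 * t) := by
    have : u / √(2 * t) + θ * √(2 * t) = (u + 2 * θ * t) / √(2 * t) := by
      field_simp
      rw [sq_sqrt (by positivity)]
    rw [this]
    exact div_nonneg (by linarith) (sqrt_nonneg _)
  rw [gfun, norm_mul, norm_mul, Real.norm_of_nonneg (erfc_nonneg _),
    Real.norm_of_nonneg (exp_pos _).le, Real.norm_of_nonneg (exp_pos _).le, Real.norm_eq_abs,
    mul_assoc, ← exp_mul_exp_neg_sq_eq θ ht u]
  gcongr
  exact erfc_le_exp_neg_sq harg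

theorem smoothExpDecay_gfun (θ : ℝ) (ht : 0 < t) : SmoothExpDecay (gfun θ t) where
  contDiff := contDiff_gfun θ t
  isBigO n := by
    obtain ⟨Q, hQ⟩ := exists_iteratedDeriv_gfun_eq θ ht n
    have hgauss : (fun u => exp (-u ^ 2 / (2 * t))) =O[atTop] fun u => exp (-u) :=
      (polyGauss_isBigO_exp_neg ht 1).congr_left fun u => by rw [polyGauss, eval_one, one_mul]
    rw [hQ]
    exact (((gfun_isBigO_gaussian θ ht).trans hgauss).const_mul_left _).add
      (polyGauss_isBigO_exp_neg ht Q)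

end Gfun

theorem Pt_eq_halfLineCorr (θ : ℝ) {t : ℝ} (ht : 0 < t) {f : ℝ → ℝ}
    (hf : MemLp f ⊤ (volume.restrict (Ioi 0))) :
    Pt θ t f = (fun x => halfLineCorr (pker t 0) f (-x)) - halfLineCorr (pker t 0) f
      + (2 : ℝ) • halfLineCorr (gfun θ t) f + (1 / θ * f 0) • gfun θ t := by
  have integrable {K : ℝ → ℝ} (hK : SmoothExpDecay K) (x : ℝ) :
      Integrable (fun y => K (x + y) * f y) (volume.restrict (Ioi 0)) :=
    integrable_comp_const_add_mul hK.contDiff.continuous (hK.isBigO 0) hf x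
  funext x
  have hp := smoothExpDecay_pker_zero ht
  have hsplit (y : ℝ) : (pker t x y - pker t x (-y) + 2 * gfun θ t (x + y)) * f y =
      pker t 0 (-x + y) * f y - pker t 0 (x + y) * f y + 2 * (gfun θ t (x + y) * f y) := by
    simp only [pker]
    ring_nf
  simp only [Pt, hsplit, Pi.add_apply, Pi.sub_apply, Pi.smul_apply, smul_eq_mul, halfLineCorr]
  have hdiff : Integrable (fun y => pker t 0 (-x + y) * f y - pker t 0 (x + y) * f y)
      (volume.restrict (Ioi 0)) := (integrable hp (-x)).sub (integrable hp x)
  rw [integral_add hdiff ((integrable (smoothExpDecay_gfun θ ht) x).const_mul 2),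
    integral_sub (integrable hp (-x)) (integrable hp x), integral_const_mul]
  ring

theorem memS.memLp_top {f : ℝ → ℝ} (hf : memS f) : MemLp f ⊤ (volume.restrict (Ioi 0)) := by
  obtain ⟨hdiff, ⟨a, ha⟩, -, -, htop⟩ := hf
  obtain ⟨M, hM⟩ := isBigO_principal.1
    (isBigO_one_principal_Ioi_of_tendsto hdiff.continuousOn ha htop)
  refine memLp_top_of_bound (hdiff.continuousOn.aestronglyMeasurable measurableSet_Ioi) M ?_
  filter_upwards [ae_restrict_mem measurableSet_Ioi] with x hx
  simpa only [norm_one, mul_one] using hM x hx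

theorem memS_of_contDiff {F : ℝ → ℝ} (hF : ContDiff ℝ 2 F) (htop : Tendsto F atTop (𝓝 0)) :
    memS F := by
  have hlim {G : ℝ → ℝ} (hG : Continuous G) : ∃ a, Tendsto G (𝓝[>] 0) (𝓝 a) :=
    ⟨G 0, hG.continuousWithinAt⟩
  have hF' : ContDiff ℝ 1 (deriv F) := hF.deriv'
  exact ⟨hF.contDiffOn, hlim hF.continuous, hlim hF'.continuous, hlim (hF'.continuous_deriv le_rfl),
    htop⟩

theorem Pt_deriv_mem_S_general {θ t : ℝ} (_hθ : θ ≠ 0) (ht : 0 < t) {f : ℝ → ℝ}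
    (hf : MemLp f ⊤ (volume.restrict (Ioi 0))) (hftop : Tendsto f atTop (𝓝 0)) :
    ContDiff ℝ ∞ (Pt θ t f) ∧ ∀ n, Tendsto (iteratedDeriv n (Pt θ t f)) atTop (𝓝 0) := by
  have hp := smoothExpDecay_pker_zero ht
  have hg := smoothExpDecay_gfun θ ht
  have hreflected := hp.halfLineCorr_comp_neg_mem_smoothVanishing
    (integrable_iteratedDeriv_pker_zero ht) hf hftop
  change Pt θ t f ∈ smoothVanishing
  rw [Pt_eq_halfLineCorr θ ht hf]
  exact add_mem (add_mem (sub_mem hreflected (hp.halfLineCorr hf).mem_smoothVanishing)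
    (Submodule.smul_mem _ _ (hg.halfLineCorr hf).mem_smoothVanishing))
    (Submodule.smul_mem _ _ hg.mem_smoothVanishing)

/-- For `f ∈ 𝒮`, the function `(P_t f)'·1_{(0,∞)}` belongs to `𝒮`: `(P_t f)'` is C² on
`(0,∞)`, the one-sided limits at `0⁺` of `(P_t f)'`, `(P_t f)''` and `(P_t f)'''` exist and
are finite, and `lim_{x→∞} (P_t f)'(x) = 0`. -/
theorem Pt_deriv_mem_S (θ t : ℝ) (hθ : 0 < θ) (ht : 0 < t)
    (f : ℝ → ℝ) (hf : memS f) :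
    ContDiffOn ℝ 2 (deriv (Pt θ t f)) (Set.Ioi 0) ∧
    (∃ a : ℝ, Filter.Tendsto (deriv (Pt θ t f)) (nhdsWithin 0 (Set.Ioi 0)) (nhds a)) ∧
    (∃ b : ℝ, Filter.Tendsto (deriv (deriv (Pt θ t f))) (nhdsWithin 0 (Set.Ioi 0)) (nhds b)) ∧
    (∃ c : ℝ,
      Filter.Tendsto (deriv (deriv (deriv (Pt θ t f)))) (nhdsWithin 0 (Set.Ioi 0)) (nhds c)) ∧
    Filter.Tendsto (deriv (Pt θ t f)) Filter.atTop (nhds 0) := by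
  obtain ⟨hsmooth, hvanish⟩ := Pt_deriv_mem_S_general hθ.ne' ht hf.memLp_top hf.2.2.2.2
  exact memS_of_contDiff (contDiff_infty.1 (contDiff_infty_iff_deriv.1 hsmooth).2 2)
    (iteratedDeriv_one (f := Pt θ t f) ▸ hvanish 1)
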